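/- Let H be a real Hilbert space, n ≥ 2, and let u : [0, T] → H^n be a solution of the ODE system du_i/dt = Σ_{j≠i} (u_j − u_i)/‖u_j − u_i‖ whose coordinates are pairwise distinct at every time in [0, T). Then the Hausdorff distance between the sets {u₁(T),…,uₙ(T)} and {u₁(0),…,uₙ(0)} is at most ((n−1)/2) · δ(u(0)), where δ(x) = min_{i<j} ‖x_i − x_j‖. -/

import Mathlib

/-!
The monotonicity of the subgradient `v ↦ v / ‖v‖` of the norm shows that a third particle never
pushes two given ones apart, while each of these two attracts the other at unit speed. Hence every
pairwise distance decreases at speed at least `2`, and since it stays nonnegative, `2 T ≤ δ(u(0))`.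
A particle moves at speed at most `n - 1`, so it is displaced by at most
`(n - 1) T ≤ ((n - 1) / 2) δ(u(0))`.
-/

open Set NormedSpace

section MeanValue

variable {E : Type*} [NormedAddCommGroup E]

lemma lipschitzOnWith_Icc_of_nnnorm_deriv_le [NormedSpace ℝ E] {f f' : ℝ → E} {a b : ℝ}
    {C : NNReal} (hf : ContinuousOn f (Icc a b)) (hf' : ∀ t ∈ Ioo a b, HasDerivAt f (f' t) t)
    (bound : ∀ t ∈ Ioo a b, ‖f' t‖₊ ≤ C) : LipschitzOnWith C f (Icc a b) := by
  rcases eq_or_ne a b with rfl | hab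
  · simp [LipschitzOnWith]
  · rw [← closure_Ioo hab] at hf ⊢
    exact .closure hf <| (convex_Ioo a b).lipschitzOnWith_of_nnnorm_hasDerivWithin_le
      (fun t ht => (hf' t ht).hasDerivWithinAt) bound

lemma hasDerivAt_norm_of_ne_zero [InnerProductSpace ℝ E] {f : ℝ → E} {f' : E} {t : ℝ}
    (hf : HasDerivAt f f' t) (hne : f t ≠ 0) :
    HasDerivAt (fun s => ‖f s‖) (inner ℝ (f t) f' / ‖f t‖) t := by
  have hsqrt := hf.norm_sq.sqrt (by simpa using hne)
  simpa [Real.sqrt_sq, mul_div_mul_left] using hsqrt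

lemma norm_le_norm_sub_of_inner_deriv_le [InnerProductSpace ℝ E] {f f' : ℝ → E} {a b c : ℝ}
    (hab : a ≤ b) (hf : ContinuousOn f (Icc a b)) (hne : ∀ t ∈ Ioo a b, f t ≠ 0)
    (hf' : ∀ t ∈ Ioo a b, HasDerivAt f (f' t) t)
    (bound : ∀ t ∈ Ioo a b, inner ℝ (f t) (f' t) ≤ -c * ‖f t‖) :
    ‖f b‖ ≤ ‖f a‖ - c * (b - a) := by
  have hderiv t (ht : t ∈ Ioo a b) := hasDerivAt_norm_of_ne_zero (hf' t ht) (hne t ht)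
  have hdecay := (convex_Icc a b).image_sub_le_mul_sub_of_deriv_le (C := -c) hf.norm
    (by
      rw [interior_Icc]
      exact fun t ht => (hderiv t ht).differentiableAt.differentiableWithinAt)
    (by
      rw [interior_Icc]
      intro t ht
      rw [(hderiv t ht).deriv, div_le_iff₀ (norm_pos_iff.2 (hne t ht))]
      exact bound t ht)
    a (left_mem_Icc.2 hab) b (right_mem_Icc.2 hab) hab
  linarith

end MeanValue

lemma norm_normalize_le_one {E : Type*} [NormedAddCommGroup E] [NormedSpace ℝ E] (x : E) :
    ‖normalize x‖ ≤ 1 := by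
  rw [NormedSpace.normalize, norm_smul, norm_inv, norm_norm]
  exact inv_mul_le_one

section InnerNormalize

variable {E : Type*} [NormedAddCommGroup E] [InnerProductSpace ℝ E]

lemma real_inner_normalize_self (x : E) : inner ℝ x (normalize x) = ‖x‖ := by
  rw [NormedSpace.normalize, inner_smul_right, real_inner_self_eq_norm_mul_norm, ← mul_assoc]
  exact inv_mul_mul_self ‖x‖

lemma real_inner_normalize_le_norm (x y : E) : inner ℝ x (normalize y) ≤ ‖x‖ :=
  (real_inner_le_norm _ _).trans <|
    mul_le_of_le_one_right (norm_nonneg _) (norm_normalize_le_one y)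

lemma real_inner_sub_normalize_sub_nonneg (x y : E) :
    0 ≤ inner ℝ (x - y) (normalize x - normalize y) := by
  rw [inner_sub_left, inner_sub_right, inner_sub_right, real_inner_normalize_self,
    real_inner_normalize_self]
  linarith [real_inner_normalize_le_norm x y, real_inner_normalize_le_norm y x]

end InnerNormalize

section Attraction

variable {ι E : Type*} [Fintype ι] [DecidableEq ι] [NormedAddCommGroup E]

/-- The velocity of particle `i` in the configuration `x` under unit-strength attraction by all the
others: the right-hand side of the ODE system. A particle located at `x i` contributes `0`. -/
noncomputable def attraction [NormedSpace ℝ E] (x : ι → E) (i : ι) : E :=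
  ∑ j ∈ Finset.univ.erase i, normalize (x j - x i)

lemma attraction_eq_sum [NormedSpace ℝ E] (x : ι → E) (i : ι) :
    attraction x i = ∑ j, normalize (x j - x i) :=
  Finset.sum_erase _ (by simp)

lemma nnnorm_attraction_le [NormedSpace ℝ E] (x : ι → E) (i : ι) :
    ‖attraction x i‖₊ ≤ (Fintype.card ι - 1 : ℕ) := by
  calc ‖attraction x i‖₊
      ≤ ∑ _j ∈ Finset.univ.erase i, (1 : NNReal) :=
        nnnorm_sum_le_of_le _ fun j _ => norm_normalize_le_one (x j - x i)
    _ = (Fintype.card ι - 1 : ℕ) := by simp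

lemma inner_sub_attraction_sub_le [InnerProductSpace ℝ E] (x : ι → E) {i j : ι} (hij : i ≠ j) :
    inner ℝ (x i - x j) (attraction x i - attraction x j) ≤ -2 * ‖x i - x j‖ := by
  let approach (k : ι) : ℝ := inner ℝ (x i - x j) (normalize (x k - x j) - normalize (x k - x i))
  have approach_nonneg (k : ι) : 0 ≤ approach k := by
    simpa only [approach, sub_sub_sub_cancel_left] using
      real_inner_sub_normalize_sub_nonneg (x k - x j) (x k - x i)
  have approach_left : approach i = ‖x i - x j‖ := by
    simp [approach, real_inner_normalize_self]
  have approach_right : approach j = ‖x i - x j‖ := by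
    simp [approach, ← normalize_neg, real_inner_normalize_self]
  have hsum : inner ℝ (x i - x j) (attraction x i - attraction x j) = -∑ k, approach k := by
    simp only [approach, attraction_eq_sum, ← inner_sum, Finset.sum_sub_distrib]
    rw [← inner_neg_right, neg_sub]
  have hpair := Finset.add_le_sum (fun k _ => approach_nonneg k) (Finset.mem_univ i)
    (Finset.mem_univ j) hij
  linarith

end Attraction

section Separation

variable {ι E : Type*} [NormedAddCommGroup E]

/-- The least distance between two particles of the configuration `x` carrying different indices,
written `δ(x)` in the paper. It is `0` when two such particles coincide, unlike
`Set.infsep (Set.range x)`; the junk value for a subsingleton index type is `0`. -/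
noncomputable def minSeparation (x : ι → E) : ℝ :=
  sInf {d : ℝ | ∃ i j : ι, i ≠ j ∧ d = ‖x i - x j‖}

lemma le_minSeparation [Nontrivial ι] {x : ι → E} {r : ℝ}
    (h : ∀ i j, i ≠ j → r ≤ ‖x i - x j‖) : r ≤ minSeparation x := by
  obtain ⟨i, j, hij⟩ := exists_pair_ne ι
  refine le_csInf ⟨_, i, j, hij, rfl⟩ ?_
  rintro _ ⟨i, j, hij, rfl⟩
  exact h i j hij

lemma minSeparation_eq_sInf_lt [LinearOrder ι] (x : ι → E) :
    minSeparation x = sInf {d : ℝ | ∃ i j : ι, i < j ∧ d = ‖x i - x j‖} := by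
  refine congrArg sInf (Set.ext fun d => ?_)
  constructor
  · rintro ⟨i, j, hij, hd⟩
    rcases hij.lt_or_gt with hlt | hgt
    · exact ⟨i, j, hlt, hd⟩
    · exact ⟨j, i, hgt, hd.trans (norm_sub_rev _ _)⟩
  · rintro ⟨i, j, hij, hd⟩
    exact ⟨i, j, hij.ne, hd⟩

end Separation

lemma hausdorffDist_range_le {ι X : Type*} [PseudoMetricSpace X] {f g : ι → X} {r : ℝ}
    (hr : 0 ≤ r) (h : ∀ i, dist (f i) (g i) ≤ r) :
    Metric.hausdorffDist (range f) (range g) ≤ r := by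
  refine Metric.hausdorffDist_le_of_mem_dist hr ?_ ?_
  · rintro _ ⟨i, rfl⟩
    exact ⟨g i, mem_range_self i, h i⟩
  · rintro _ ⟨i, rfl⟩
    exact ⟨f i, mem_range_self i, (dist_comm _ _).trans_le (h i)⟩

section Flow

variable {ι E : Type*} [Fintype ι] [DecidableEq ι] [NormedAddCommGroup E] {T : ℝ} {u : ℝ → ι → E}

lemma dist_flow_endpoint_le [NormedSpace ℝ E] (hT : 0 ≤ T)
    (hcont : ∀ i, ContinuousOn (fun s => u s i) (Icc 0 T))
    (hode : ∀ t ∈ Ioo 0 T, ∀ i, HasDerivAt (fun s => u s i) (attraction (u t) i) t) (i : ι) :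
    dist (u T i) (u 0 i) ≤ (Fintype.card ι - 1) * T := by
  have : Nonempty ι := ⟨i⟩
  have hlip := lipschitzOnWith_Icc_of_nnnorm_deriv_le (hcont i) (fun t ht => hode t ht i)
    fun t _ => nnnorm_attraction_le (u t) i
  have hdist := hlip.dist_le_mul T (right_mem_Icc.2 hT) 0 (left_mem_Icc.2 hT)
  rwa [NNReal.coe_natCast, Nat.cast_pred Fintype.card_pos, Real.dist_0_eq_abs,
    abs_of_nonneg hT] at hdist

variable [InnerProductSpace ℝ E]

lemma norm_sub_flow_endpoint_le (hT : 0 ≤ T)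
    (hcont : ∀ i, ContinuousOn (fun s => u s i) (Icc 0 T))
    (hdistinct : ∀ t ∈ Ioo 0 T, Function.Injective (u t))
    (hode : ∀ t ∈ Ioo 0 T, ∀ i, HasDerivAt (fun s => u s i) (attraction (u t) i) t)
    {i j : ι} (hij : i ≠ j) :
    ‖u T i - u T j‖ ≤ ‖u 0 i - u 0 j‖ - 2 * T := by
  simpa using norm_le_norm_sub_of_inner_deriv_le (c := 2) hT ((hcont i).sub (hcont j))
    (fun t ht => sub_ne_zero.2 ((hdistinct t ht).ne hij))
    (fun t ht => (hode t ht i).sub (hode t ht j))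
    fun t _ => inner_sub_attraction_sub_le (u t) hij

lemma two_mul_le_minSeparation_of_flow [Nontrivial ι] (hT : 0 ≤ T)
    (hcont : ∀ i, ContinuousOn (fun s => u s i) (Icc 0 T))
    (hdistinct : ∀ t ∈ Ioo 0 T, Function.Injective (u t))
    (hode : ∀ t ∈ Ioo 0 T, ∀ i, HasDerivAt (fun s => u s i) (attraction (u t) i) t) :
    2 * T ≤ minSeparation (u 0) := by
  refine le_minSeparation fun i j hij => ?_
  linarith [norm_sub_flow_endpoint_le hT hcont hdistinct hode hij, norm_nonneg (u T i - u T j)]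

theorem flow_endpoint_hausdorff_bound_general [Nontrivial ι] (hT : 0 ≤ T)
    (hcont : ∀ i, ContinuousOn (fun s => u s i) (Icc 0 T))
    (hdistinct : ∀ t ∈ Ioo 0 T, Function.Injective (u t))
    (hode : ∀ t ∈ Ioo 0 T, ∀ i, HasDerivAt (fun s => u s i) (attraction (u t) i) t) :
    Metric.hausdorffDist (range (u T)) (range (u 0)) ≤
      (((Fintype.card ι : ℝ) - 1) / 2) * minSeparation (u 0) := by
  have hcard : (0 : ℝ) ≤ Fintype.card ι - 1 :=
    sub_nonneg.2 (Nat.one_le_cast.2 Fintype.card_pos)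
  calc Metric.hausdorffDist (range (u T)) (range (u 0))
      ≤ (Fintype.card ι - 1) * T :=
        hausdorffDist_range_le (mul_nonneg hcard hT) (dist_flow_endpoint_le hT hcont hode)
    _ = (((Fintype.card ι : ℝ) - 1) / 2) * (2 * T) := by ring
    _ ≤ (((Fintype.card ι : ℝ) - 1) / 2) * minSeparation (u 0) := by
        gcongr
        exact two_mul_le_minSeparation_of_flow hT hcont hdistinct hode

end Flow

/-- **Inequality (7).** If `u : [0, T] → H^n` solves
`du_i/dt = ∑_{j ≠ i} (u_j − u_i)/‖u_j − u_i‖` with pairwise distinct coordinates at every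
time in `[0, T)`, then the Hausdorff distance between `{u₁(T),…,uₙ(T)}` and
`{u₁(0),…,uₙ(0)}` is at most `((n−1)/2) · δ(u(0))`, where `δ(x) = min_{i<j} ‖x_i − x_j‖`. -/
theorem flow_endpoint_hausdorff_bound
    {H : Type*} [NormedAddCommGroup H] [InnerProductSpace ℝ H] [CompleteSpace H]
    (n : ℕ) (hn : 2 ≤ n) (T : ℝ) (hT : 0 ≤ T) (u : ℝ → Fin n → H)
    (hcont : ∀ i : Fin n, ContinuousOn (fun s => u s i) (Set.Icc (0 : ℝ) T))
    (hdistinct : ∀ t ∈ Set.Ico (0 : ℝ) T, ∀ i j : Fin n, i ≠ j → u t i ≠ u t j)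
    (hode : ∀ t ∈ Set.Ico (0 : ℝ) T, ∀ i : Fin n,
      HasDerivWithinAt (fun s => u s i)
        (∑ j ∈ Finset.univ.erase i, (‖u t j - u t i‖)⁻¹ • (u t j - u t i))
        (Set.Icc (0 : ℝ) T) t) :
    Metric.hausdorffDist (Set.range (u T)) (Set.range (u 0)) ≤
      (((n : ℝ) - 1) / 2) * sInf {d : ℝ | ∃ i j : Fin n, i < j ∧ d = ‖u 0 i - u 0 j‖} := by
  have : Nontrivial (Fin n) := Fin.nontrivial_iff_two_le.2 hn
  simpa only [Fintype.card_fin, minSeparation_eq_sInf_lt] using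
    flow_endpoint_hausdorff_bound_general hT hcont
      (fun t ht i j => not_imp_not.1 (hdistinct t (Ioo_subset_Ico_self ht) i j))
      (fun t ht i => (hode t (Ioo_subset_Ico_self ht) i).hasDerivAt (Icc_mem_nhds ht.1 ht.2))
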